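/- In any nondegenerate triangle, the distance from the symmedian point X6 to the incenter X1 satisfies dist(X6, X1) ≤ ((2√2 − 1)/7)·dist(X6, X8), where X8 is the Nagel point. -/

import Mathlib

/-- The point with normalized barycentric coordinates `(x : y : z)`
with respect to the triangle `A B C`. -/
noncomputable def bary (A B C : EuclideanSpace ℝ (Fin 2)) (x y z : ℝ) :
    EuclideanSpace ℝ (Fin 2) :=
  (x + y + z)⁻¹ • (x • A + y • B + z • C)

/-- The triangle center with barycentric coordinates
`(f a b c : f b c a : f c a b)` where `a, b, c` are the side lengths. -/
noncomputable def tcenter (f : ℝ → ℝ → ℝ → ℝ) (A B C : EuclideanSpace ℝ (Fin 2)) :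
    EuclideanSpace ℝ (Fin 2) :=
  bary A B C (f (dist B C) (dist C A) (dist A B))
    (f (dist C A) (dist A B) (dist B C))
    (f (dist A B) (dist B C) (dist C A))

/-!
Let `I`, `K`, `N` be the incenter, the symmedian point and the Nagel point of a triangle with sides
`a, b, c`, and put `p = a + b + c`, `S = a² + b² + c²`. Since `(2√2 - 1) / 7 = 1 / (1 + 2√2)`, the
claim is `(9 + 4√2) |IK|² ≤ |KN|²`. In barycentric coordinates
`|IK|² = abc · P / (p S²)`, `|IN|² = W / p` and `|KN|² = |IK|² + |IN|² + Q / (p S)`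
with symmetric polynomials `P, Q, W` in the sides, so the claim becomes
`(8 + 4√2) abc · P ≤ S Q + S² W`.

Suppose that `c` is the longest side. Then `4ab · P ≤ (a + b) Q` and `P ≤ c W`, and `Q, W ≥ 0`, so
the two summands of the constant `8 + 4√2` are absorbed separately by `√2 c (a + b) ≤ S` and
`8abc² ≤ S²`. Both of these are AM-GM inequalities, sharp for `a = b = c / √2`.
-/

theorem bary_eq_affineCombination (A B C : EuclideanSpace ℝ (Fin 2)) {x y z : ℝ}
    (hs : x + y + z ≠ 0) :
    bary A B C x y z = Finset.univ.affineCombination ℝ ![A, B, C]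
      ![x / (x + y + z), y / (x + y + z), z / (x + y + z)] := by
  have hsum : ∑ i, ![x / (x + y + z), y / (x + y + z), z / (x + y + z)] i = 1 := by
    simp only [Fin.sum_univ_three, Matrix.cons_val]
    field_simp
  rw [Finset.affineCombination_eq_linear_combination _ _ _ hsum]
  simp only [bary, Fin.sum_univ_three, Matrix.cons_val]
  module

theorem dist_bary_sq (A B C : EuclideanSpace ℝ (Fin 2)) {x y z x' y' z' : ℝ}
    (hs : x + y + z ≠ 0) (hs' : x' + y' + z' ≠ 0) :
    dist (bary A B C x y z) (bary A B C x' y' z') ^ 2 =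
      -(dist B C ^ 2 * (y / (x + y + z) - y' / (x' + y' + z'))
            * (z / (x + y + z) - z' / (x' + y' + z'))
        + dist C A ^ 2 * (z / (x + y + z) - z' / (x' + y' + z'))
            * (x / (x + y + z) - x' / (x' + y' + z'))
        + dist A B ^ 2 * (x / (x + y + z) - x' / (x' + y' + z'))
            * (y / (x + y + z) - y' / (x' + y' + z'))) := by
  rw [bary_eq_affineCombination A B C hs, bary_eq_affineCombination A B C hs', sq,
    EuclideanGeometry.dist_affineCombination]
  · simp only [Fin.sum_univ_three, Pi.sub_apply, Matrix.cons_val, dist_self, dist_comm B A,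
      dist_comm C B, dist_comm A C]
    ring
  all_goals
    simp only [Fin.sum_univ_three, Matrix.cons_val]
    field_simp

/-- The symmetric quartic `P` with `|IK|² = abc · P / (p S²)`, where `I`, `K` are the incenter and
the symmedian point of a triangle with sides `a, b, c`, `p = a + b + c` and `S = a² + b² + c²`. -/
def incenterSymmedianPoly (a b c : ℝ) : ℝ :=
  (a ^ 2 + b ^ 2 + c ^ 2) * (2 * (b * c + c * a + a * b) - (a ^ 2 + b ^ 2 + c ^ 2))
    - 3 * (a + b + c) * (a * b * c)

/-- The symmetric cubic `W` with `|IN|² = W / p`, where `I`, `N` are the incenter and the Nagel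
point of a triangle with sides `a, b, c` and `p = a + b + c`. -/
def incenterNagelPoly (a b c : ℝ) : ℝ :=
  (a + b + c) * (3 * (b * c + c * a + a * b) - (a ^ 2 + b ^ 2 + c ^ 2)) - 18 * (a * b * c)

/-- The symmetric quintic `Q` with `|KN|² = |IK|² + |IN|² + Q / (p S)`, where `I`, `K`, `N` are the
incenter, the symmedian point and the Nagel point of a triangle with sides `a, b, c`,
`p = a + b + c` and `S = a² + b² + c²`. -/
def symmedianNagelPoly (a b c : ℝ) : ℝ :=
  (a + b + c) * (b * c + c * a + a * b)
      * (2 * (b * c + c * a + a * b) - (a ^ 2 + b ^ 2 + c ^ 2))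
    - (14 * (b * c + c * a + a * b) - 5 * (a ^ 2 + b ^ 2 + c ^ 2)) * (a * b * c)

section Distances

variable {A B C : EuclideanSpace ℝ (Fin 2)} {a b c : ℝ}

theorem sum_sq_pos_of_sum_ne_zero (hp : a + b + c ≠ 0) : 0 < a ^ 2 + b ^ 2 + c ^ 2 := by
  nlinarith [sq_pos_of_ne_zero hp, sq_nonneg (a - b), sq_nonneg (b - c), sq_nonneg (c - a)]

theorem dist_incenter_symmedian_sq (ha : dist B C = a) (hb : dist C A = b) (hc : dist A B = c)
    (hp : a + b + c ≠ 0) :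
    dist (bary A B C a b c) (bary A B C (a ^ 2) (b ^ 2) (c ^ 2)) ^ 2 =
      a * b * c * incenterSymmedianPoly a b c
        / ((a + b + c) * (a ^ 2 + b ^ 2 + c ^ 2) ^ 2) := by
  have hS := (sum_sq_pos_of_sum_ne_zero hp).ne'
  rw [dist_bary_sq A B C hp hS, ha, hb, hc, incenterSymmedianPoly]
  field_simp
  ring

theorem dist_incenter_nagel_sq (ha : dist B C = a) (hb : dist C A = b) (hc : dist A B = c)
    (hp : a + b + c ≠ 0) :
    dist (bary A B C a b c) (bary A B C (b + c - a) (c + a - b) (a + b - c)) ^ 2 =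
      incenterNagelPoly a b c / (a + b + c) := by
  have hN : b + c - a + (c + a - b) + (a + b - c) = a + b + c := by ring
  rw [dist_bary_sq A B C hp (hN ▸ hp), hN, ha, hb, hc, incenterNagelPoly]
  field_simp
  ring

theorem dist_symmedian_nagel_sq (ha : dist B C = a) (hb : dist C A = b) (hc : dist A B = c)
    (hp : a + b + c ≠ 0) :
    dist (bary A B C (a ^ 2) (b ^ 2) (c ^ 2))
        (bary A B C (b + c - a) (c + a - b) (a + b - c)) ^ 2 =
      dist (bary A B C a b c) (bary A B C (a ^ 2) (b ^ 2) (c ^ 2)) ^ 2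
        + dist (bary A B C a b c) (bary A B C (b + c - a) (c + a - b) (a + b - c)) ^ 2
        + symmedianNagelPoly a b c / ((a + b + c) * (a ^ 2 + b ^ 2 + c ^ 2)) := by
  have hS := (sum_sq_pos_of_sum_ne_zero hp).ne'
  have hN : b + c - a + (c + a - b) + (a + b - c) = a + b + c := by ring
  rw [dist_incenter_symmedian_sq ha hb hc hp, dist_incenter_nagel_sq ha hb hc hp,
    dist_bary_sq A B C hS (hN ▸ hp), hN, ha, hb, hc, incenterSymmedianPoly, incenterNagelPoly,
    symmedianNagelPoly]
  field_simp
  ring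

end Distances

section SortedSides

variable {a b c : ℝ}

-- The point of this substitution is that each of the four polynomial inequalities below becomes
-- the nonnegativity of a polynomial in `x, y, z` without negative coefficients.
theorem exists_nonneg_param_of_sorted (hab : a ≤ b) (hbc : b ≤ c) (hc : c ≤ a + b) :
    ∃ x y z : ℝ, 0 ≤ x ∧ 0 ≤ y ∧ 0 ≤ z ∧ a = x + z ∧ b = x + y + z ∧ c = x + y + 2 * z :=
  ⟨a + b - c, b - a, c - b, by linarith, by linarith, by linarith, by ring, by ring, by ring⟩

theorem incenterNagelPoly_nonneg (hab : a ≤ b) (hbc : b ≤ c) (hc : c ≤ a + b) :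
    0 ≤ incenterNagelPoly a b c := by
  obtain ⟨x, y, z, hx, hy, hz, rfl, rfl, rfl⟩ := exists_nonneg_param_of_sorted hab hbc hc
  unfold incenterNagelPoly
  ring_nf
  positivity

theorem symmedianNagelPoly_nonneg (hab : a ≤ b) (hbc : b ≤ c) (hc : c ≤ a + b) :
    0 ≤ symmedianNagelPoly a b c := by
  obtain ⟨x, y, z, hx, hy, hz, rfl, rfl, rfl⟩ := exists_nonneg_param_of_sorted hab hbc hc
  unfold symmedianNagelPoly
  ring_nf
  positivity

theorem incenterSymmedianPoly_le_mul_incenterNagelPoly (hab : a ≤ b) (hbc : b ≤ c)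
    (hc : c ≤ a + b) : incenterSymmedianPoly a b c ≤ c * incenterNagelPoly a b c := by
  obtain ⟨x, y, z, hx, hy, hz, rfl, rfl, rfl⟩ := exists_nonneg_param_of_sorted hab hbc hc
  rw [← sub_nonneg]
  unfold incenterSymmedianPoly incenterNagelPoly
  ring_nf
  positivity

theorem mul_incenterSymmedianPoly_le_mul_symmedianNagelPoly (hab : a ≤ b) (hbc : b ≤ c)
    (hc : c ≤ a + b) :
    4 * (a * b) * incenterSymmedianPoly a b c ≤ (a + b) * symmedianNagelPoly a b c := by
  obtain ⟨x, y, z, hx, hy, hz, rfl, rfl, rfl⟩ := exists_nonneg_param_of_sorted hab hbc hc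
  rw [← sub_nonneg]
  unfold incenterSymmedianPoly symmedianNagelPoly
  ring_nf
  positivity

end SortedSides

theorem sqrt_two_mul_mul_add_le (a b c : ℝ) : √2 * c * (a + b) ≤ a ^ 2 + b ^ 2 + c ^ 2 := by
  have hsq : √2 ^ 2 = 2 := Real.sq_sqrt zero_le_two
  linarith [sq_nonneg (√2 * c - (a + b)), sq_nonneg (a - b),
    show (√2 * c - (a + b)) ^ 2 = 2 * c ^ 2 - 2 * (√2 * c * (a + b)) + (a + b) ^ 2 by
      linear_combination c ^ 2 * hsq]

theorem eight_mul_mul_mul_sq_le (a b c : ℝ) :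
    8 * (a * b * c) * c ≤ (a ^ 2 + b ^ 2 + c ^ 2) ^ 2 :=
  calc 8 * (a * b * c) * c = 4 * (2 * a * b) * c ^ 2 := by ring
    _ ≤ 4 * (a ^ 2 + b ^ 2) * c ^ 2 := by gcongr; exact two_mul_le_add_sq a b
    _ ≤ (a ^ 2 + b ^ 2 + c ^ 2) ^ 2 := four_mul_le_sq_add (a ^ 2 + b ^ 2) (c ^ 2)

theorem mul_incenterSymmedianPoly_le_of_sorted {a b c : ℝ} (hab : a ≤ b) (hbc : b ≤ c)
    (hc : c ≤ a + b) :
    (8 + 4 * √2) * (a * b * c * incenterSymmedianPoly a b c) ≤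
      (a ^ 2 + b ^ 2 + c ^ 2) * symmedianNagelPoly a b c
        + (a ^ 2 + b ^ 2 + c ^ 2) ^ 2 * incenterNagelPoly a b c := by
  have ha₀ : 0 ≤ a := by linarith
  have hb₀ : 0 ≤ b := by linarith
  have hc₀ : 0 ≤ c := by linarith
  have hQ := symmedianNagelPoly_nonneg hab hbc hc
  have hW := incenterNagelPoly_nonneg hab hbc hc
  calc (8 + 4 * √2) * (a * b * c * incenterSymmedianPoly a b c)
      = √2 * c * (4 * (a * b) * incenterSymmedianPoly a b c)
        + 8 * (a * b * c) * incenterSymmedianPoly a b c := by ring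
    _ ≤ √2 * c * ((a + b) * symmedianNagelPoly a b c)
        + 8 * (a * b * c) * (c * incenterNagelPoly a b c) := by
      gcongr √2 * c * ?_ + 8 * (a * b * c) * ?_
      · exact mul_incenterSymmedianPoly_le_mul_symmedianNagelPoly hab hbc hc
      · exact incenterSymmedianPoly_le_mul_incenterNagelPoly hab hbc hc
    _ = √2 * c * (a + b) * symmedianNagelPoly a b c
        + 8 * (a * b * c) * c * incenterNagelPoly a b c := by ring
    _ ≤ _ := by
      gcongr
      · exact sqrt_two_mul_mul_add_le a b c
      · exact eight_mul_mul_mul_sq_le a b c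

theorem of_sorted_of_swap {α : Type*} [LinearOrder α] {p : α → α → α → Prop}
    (swap_left : ∀ a b c, p a b c → p b a c) (swap_right : ∀ a b c, p a b c → p a c b)
    (sorted : ∀ a b c, a ≤ b → b ≤ c → p a b c) (a b c : α) : p a b c := by
  wlog hab : a ≤ b generalizing a b
  · exact swap_left _ _ _ (this b a (le_of_not_ge hab))
  rcases le_total b c with hbc | hcb
  · exact sorted a b c hab hbc
  rcases le_total a c with hac | hca
  · exact swap_right _ _ _ (sorted a c b hac hcb)
  · exact swap_right _ _ _ (swap_left _ _ _ (sorted c a b hca hab))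

theorem mul_incenterSymmedianPoly_le {a b c : ℝ} (ha : a ≤ b + c) (hb : b ≤ c + a)
    (hc : c ≤ a + b) :
    (8 + 4 * √2) * (a * b * c * incenterSymmedianPoly a b c) ≤
      (a ^ 2 + b ^ 2 + c ^ 2) * symmedianNagelPoly a b c
        + (a ^ 2 + b ^ 2 + c ^ 2) ^ 2 * incenterNagelPoly a b c := by
  induction a, b, c using of_sorted_of_swap with
  | swap_left a b c ih =>
    have := ih (by linarith) (by linarith) (by linarith)
    unfold incenterSymmedianPoly symmedianNagelPoly incenterNagelPoly at *
    linarith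
  | swap_right a b c ih =>
    have := ih (by linarith) (by linarith) (by linarith)
    unfold incenterSymmedianPoly symmedianNagelPoly incenterNagelPoly at *
    linarith
  | sorted a b c hab hbc => exact mul_incenterSymmedianPoly_le_of_sorted hab hbc hc

theorem dist_incenter_symmedian_sq_le {A B C : EuclideanSpace ℝ (Fin 2)} {a b c : ℝ}
    (ha : dist B C = a) (hb : dist C A = b) (hc : dist A B = c) (hp : 0 < a + b + c) :
    (9 + 4 * √2) * dist (bary A B C a b c) (bary A B C (a ^ 2) (b ^ 2) (c ^ 2)) ^ 2 ≤
      dist (bary A B C (a ^ 2) (b ^ 2) (c ^ 2))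
        (bary A B C (b + c - a) (c + a - b) (a + b - c)) ^ 2 := by
  have hS := sum_sq_pos_of_sum_ne_zero hp.ne'
  have hA : a ≤ b + c := by linarith [dist_triangle_left B C A, dist_comm C A]
  have hB : b ≤ c + a := by linarith [dist_triangle_left C A B, dist_comm A B]
  have hC : c ≤ a + b := by linarith [dist_triangle_left A B C, dist_comm B C]
  have hpoly := mul_incenterSymmedianPoly_le hA hB hC
  have hdiv : (8 + 4 * √2) * (a * b * c * incenterSymmedianPoly a b c
        / ((a + b + c) * (a ^ 2 + b ^ 2 + c ^ 2) ^ 2)) ≤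
      incenterNagelPoly a b c / (a + b + c)
        + symmedianNagelPoly a b c / ((a + b + c) * (a ^ 2 + b ^ 2 + c ^ 2)) := by
    field_simp
    linarith
  rw [← dist_incenter_symmedian_sq ha hb hc hp.ne', ← dist_incenter_nagel_sq ha hb hc hp.ne']
    at hdiv
  linarith [dist_symmedian_nagel_sq ha hb hc hp.ne']

theorem stmt_16 (A B C : EuclideanSpace ℝ (Fin 2))
    (h : AffineIndependent ℝ ![A, B, C]) :
    dist (tcenter (fun a b c => a^2) A B C) (tcenter (fun a b c => a) A B C) ≤ ((2 * Real.sqrt 2 - 1)/7) * dist (tcenter (fun a b c => a^2) A B C) (tcenter (fun a b c => b + c - a) A B C) := by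
  have hBC : 0 < dist B C := dist_pos.2 (h.injective.ne (show (1 : Fin 3) ≠ 2 by decide))
  have hp : 0 < dist B C + dist C A + dist A B := by positivity
  have hsq := dist_incenter_symmedian_sq_le (A := A) (B := B) (C := C) rfl rfl rfl hp
  have hsqrt : √2 ^ 2 = 2 := Real.sq_sqrt zero_le_two
  have hconst : (1 + 2 * √2) ^ 2 = 9 + 4 * √2 := by linear_combination 4 * hsqrt
  rw [← hconst, ← mul_pow] at hsq
  have hle := le_of_sq_le_sq hsq dist_nonneg
  have hinv : (2 * √2 - 1) / 7 * (1 + 2 * √2) = 1 := by linear_combination 4 / 7 * hsqrt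
  have hk : 0 ≤ (2 * √2 - 1) / 7 := by linarith [Real.one_le_sqrt.2 (one_le_two (α := ℝ))]
  calc
    _ = (2 * √2 - 1) / 7 * ((1 + 2 * √2) * dist (tcenter (fun a _ _ ↦ a) A B C)
          (tcenter (fun a _ _ ↦ a ^ 2) A B C)) := by rw [← mul_assoc, hinv, one_mul, dist_comm]
    _ ≤ _ := mul_le_mul_of_nonneg_left hle hk
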